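/- Let N be odd, m = (N−1)/2, and 1 ≤ j ≤ m, and assume the coarse-grid matrix A^H is invertible. Then the two-grid coarse-grid-correction error-propagation operator E = I − I_H^h (A^H)⁻¹ I_h^H A^h acts on the fine-grid eigenvector v_j exactly as E v_j = (1 − (λ_j^h/λ_j^H)·cos⁴(jπh/2))·v_j + (λ_j^h/λ_j^H)·cos²(jπh/2)·sin²(jπh/2)·v_{N+1−j}, where λ_j^h = (4/h²)sin²(jπh/2) − k² and λ_j^H = (1/h²)sin²(jπh) − k². In particular, for low-frequency modes where I_H^h I_h^H v_j ≈ v_j, the coarse-grid correction compresses v_j by approximately the factor 1 − λ_j^h/λ_j^H. -/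

import Mathlib

open Real Matrix

/-- Fine mesh size `h = 1/(N+1)` for `N = 2m+1` interior fine-grid points. -/
noncomputable def meshH (m : ℕ) : ℝ := 1 / (2 * m + 2)

/-- The `n × n` finite-difference Helmholtz matrix with mesh size `e`: diagonal entries
`2/e² - k²`, subdiagonal and superdiagonal entries `-1/e²`, zero elsewhere. -/
noncomputable def helmholtzMat (n : ℕ) (e k : ℝ) : Matrix (Fin n) (Fin n) ℝ :=
  Matrix.of fun i j =>
    if i = j then 2 / e ^ 2 - k ^ 2
    else if i.1 + 1 = j.1 ∨ j.1 + 1 = i.1 then -(1 / e ^ 2)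
    else 0

/-- The full-weighting restriction `I_h^H : ℝ^N → ℝ^m` as an `m × N` matrix,
`(I_h^H u)_i = (u_{2i-1} + 2u_{2i} + u_{2i+1})/4`. -/
noncomputable def restrictMat (m : ℕ) : Matrix (Fin m) (Fin (2 * m + 1)) ℝ :=
  Matrix.of fun i p =>
    if p.1 = 2 * i.1 then 1 / 4
    else if p.1 = 2 * i.1 + 1 then 1 / 2
    else if p.1 = 2 * i.1 + 2 then 1 / 4
    else 0

/-- The prolongation `I_H^h = 2·(I_h^H)ᵀ` as an `N × m` matrix. -/
noncomputable def prolongMat (m : ℕ) : Matrix (Fin (2 * m + 1)) (Fin m) ℝ :=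
  (2 : ℝ) • (restrictMat m)ᵀ

/-- The fine-grid sine mode `v_j` with entries `(v_j)_i = sin(i j π h)`. -/
noncomputable def fineSine (m : ℕ) (j : ℕ) : Fin (2 * m + 1) → ℝ :=
  fun i => Real.sin ((i.1 + 1) * j * π * meshH m)

/-- The fine-grid eigenvalue `λ_j^h = (4/h²)·sin²(jπh/2) − k²`. -/
noncomputable def lamFine (m : ℕ) (k : ℝ) (j : ℕ) : ℝ :=
  4 / (meshH m) ^ 2 * Real.sin (j * π * meshH m / 2) ^ 2 - k ^ 2

/-- The coarse-grid eigenvalue `λ_j^H = (1/h²)·sin²(jπh) − k²`. -/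
noncomputable def lamCoarse (m : ℕ) (k : ℝ) (j : ℕ) : ℝ :=
  1 / (meshH m) ^ 2 * Real.sin (j * π * meshH m) ^ 2 - k ^ 2

/-!
On the coarse grid the fine modes of angle `θ` and `π - θ` agree up to sign: restriction sends
`sin (iθ)` to `cos² (θ/2)` times the coarse mode of angle `2θ`, and linear interpolation sends that
coarse mode back to `cos² (θ/2)` times the mode of angle `θ` minus `sin² (θ/2)` times the mode of
angle `π - θ`. Both Helmholtz matrices are diagonal in the sine modes, so the coarse-grid correction
mixes only these two modes.
-/

section LinearAlgebra

variable {K ι κ : Type*} [Field K] [Fintype ι] [DecidableEq ι] [Fintype κ] [DecidableEq κ]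

lemma eigenvalue_ne_zero_of_isUnit_det {B : Matrix κ κ K} {w : κ → K} {μ : K}
    (hB : IsUnit B.det) (hw : w ≠ 0) (hBw : B *ᵥ w = μ • w) : μ ≠ 0 := by
  rintro rfl
  exact hw (eq_zero_of_mulVec_eq_zero hB.ne_zero (by rw [hBw, zero_smul]))

lemma inv_mulVec_eq_inv_smul {B : Matrix κ κ K} {w : κ → K} {μ : K}
    (hB : IsUnit B.det) (hμ : μ ≠ 0) (hBw : B *ᵥ w = μ • w) : B⁻¹ *ᵥ w = μ⁻¹ • w := by
  rw [eq_inv_smul_iff₀ hμ, ← mulVec_smul, ← hBw, mulVec_mulVec, nonsing_inv_mul _ hB, one_mulVec]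

lemma coarseGridCorrection_mulVec {A : Matrix ι ι K} {B : Matrix κ κ K} {P : Matrix ι κ K}
    {R : Matrix κ ι K} {v v' : ι → K} {w : κ → K} {a μ c s : K}
    (hB : IsUnit B.det) (hμ : μ ≠ 0) (hAv : A *ᵥ v = a • v) (hBw : B *ᵥ w = μ • w)
    (hRv : R *ᵥ v = c • w) (hPw : P *ᵥ w = c • v - s • v') :
    (1 - P * B⁻¹ * R * A) *ᵥ v = (1 - a / μ * c ^ 2) • v + (a / μ * c * s) • v' := by
  have correction : (P * B⁻¹ * R * A) *ᵥ v = (a * c * μ⁻¹) • (c • v - s • v') := by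
    simp only [← mulVec_mulVec, hAv, hRv, hPw, mulVec_smul, inv_mulVec_eq_inv_smul hB hμ hBw,
      smul_smul, mul_assoc]
  rw [sub_mulVec, one_mulVec, correction]
  module

end LinearAlgebra

section Stencils

lemma sum_fin_ite_succ_eq {M : Type*} [AddCommMonoid M] {n a : ℕ} (g : ℕ → M)
    (hg : a ∉ Finset.Icc 1 n → g a = 0) :
    ∑ p : Fin n, (if (p : ℕ) + 1 = a then g (p + 1) else 0) = g a := by
  by_cases ha : a ∈ Finset.Icc 1 n
  · obtain ⟨h1, hn⟩ := Finset.mem_Icc.mp ha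
    rw [Finset.sum_eq_single_of_mem ⟨a - 1, by omega⟩ (Finset.mem_univ _)]
    · simp only [Nat.sub_add_cancel h1, if_true]
    · intro p _ hp
      exact if_neg fun hpa => hp (Fin.ext (by simp only; omega))
  · rw [hg ha]
    refine Finset.sum_eq_zero fun p _ => if_neg fun hpa => ha ?_
    rw [Finset.mem_Icc]
    omega

lemma sum_fin_ite_succ_eq_of_boundary {M : Type*} [AddCommMonoid M] {n a : ℕ} {g : ℕ → M}
    (h0 : g 0 = 0) (hn : g (n + 1) = 0) (ha : a ≤ n + 1) :
    ∑ p : Fin n, (if (p : ℕ) + 1 = a then g (p + 1) else 0) = g a := by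
  refine sum_fin_ite_succ_eq g fun hout => ?_
  rw [Finset.mem_Icc] at hout
  obtain rfl | rfl : a = 0 ∨ a = n + 1 := by omega
  exacts [h0, hn]

/- Grid functions are restrictions of some `g : ℕ → ℝ` to the interior nodes; since matrix indices
start at `0`, the index `i` stands for the node `i + 1`. -/

lemma helmholtzMat_mulVec_apply {n : ℕ} (e k : ℝ) {g : ℕ → ℝ} (h0 : g 0 = 0)
    (hn : g (n + 1) = 0) (i : Fin n) :
    (helmholtzMat n e k *ᵥ fun p => g (p + 1)) i =
      (2 / e ^ 2 - k ^ 2) * g (i + 1) - 1 / e ^ 2 * (g i + g (i + 2)) := by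
  have entry : ∀ p : Fin n, helmholtzMat n e k i p * g (p + 1) =
      (2 / e ^ 2 - k ^ 2) * (if (p : ℕ) + 1 = i + 1 then g (p + 1) else 0) -
        1 / e ^ 2 * ((if (p : ℕ) + 1 = i then g (p + 1) else 0) +
          (if (p : ℕ) + 1 = i + 2 then g (p + 1) else 0)) := by
    intro p
    simp only [helmholtzMat, of_apply, Fin.ext_iff]
    split_ifs <;> first | omega | ring
  simp only [mulVec, dotProduct, entry, Finset.sum_sub_distrib, ← Finset.mul_sum,
    Finset.sum_add_distrib]
  rw [sum_fin_ite_succ_eq_of_boundary h0 hn (by omega),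
    sum_fin_ite_succ_eq_of_boundary h0 hn (by omega),
    sum_fin_ite_succ_eq_of_boundary h0 hn (by omega)]

lemma restrictMat_mulVec_apply {m : ℕ} (g : ℕ → ℝ) (i : Fin m) :
    (restrictMat m *ᵥ fun p => g (p + 1)) i =
      (g (2 * i + 1) + 2 * g (2 * i + 2) + g (2 * i + 3)) / 4 := by
  have interior : ∀ a, 1 ≤ a → a ≤ 2 * m + 1 → a ∉ Finset.Icc 1 (2 * m + 1) → g a = 0 :=
    fun a h1 hm hout => absurd (Finset.mem_Icc.mpr ⟨h1, hm⟩) hout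
  have entry : ∀ p : Fin (2 * m + 1), restrictMat m i p * g (p + 1) =
      ((if (p : ℕ) + 1 = 2 * i + 1 then g (p + 1) else 0) +
        2 * (if (p : ℕ) + 1 = 2 * i + 2 then g (p + 1) else 0) +
        (if (p : ℕ) + 1 = 2 * i + 3 then g (p + 1) else 0)) / 4 := by
    intro p
    simp only [restrictMat, of_apply]
    split_ifs <;> first | omega | ring
  simp only [mulVec, dotProduct, entry, ← Finset.sum_div, Finset.sum_add_distrib,
    ← Finset.mul_sum]
  rw [sum_fin_ite_succ_eq g (interior _ (by omega) (by omega)),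
    sum_fin_ite_succ_eq g (interior _ (by omega) (by omega)),
    sum_fin_ite_succ_eq g (interior _ (by omega) (by omega))]

/- The two rounded-down indices are the coarse nodes on either side of the fine node `p + 1`; they
coincide when `p + 1` is itself a coarse node. -/
lemma prolongMat_mulVec_apply {m : ℕ} {g : ℕ → ℝ} (h0 : g 0 = 0) (hm : g (m + 1) = 0)
    (p : Fin (2 * m + 1)) :
    (prolongMat m *ᵥ fun i => g (i + 1)) p = (g ((p + 1) / 2) + g ((p + 2) / 2)) / 2 := by
  have entry : ∀ i : Fin m, prolongMat m p i * g (i + 1) =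
      ((if (i : ℕ) + 1 = (p + 1) / 2 then g (i + 1) else 0) +
        (if (i : ℕ) + 1 = (p + 2) / 2 then g (i + 1) else 0)) / 2 := by
    intro i
    simp only [prolongMat, restrictMat, Matrix.smul_apply, transpose_apply, of_apply, smul_eq_mul]
    split_ifs <;> first | omega | ring
  simp only [mulVec, dotProduct, entry, ← Finset.sum_div, Finset.sum_add_distrib]
  rw [sum_fin_ite_succ_eq_of_boundary h0 hm (by omega),
    sum_fin_ite_succ_eq_of_boundary h0 hm (by omega)]

end Stencils

/-- The sine mode of angle `θ` on `n` interior nodes, with value `sin (iθ)` at node `i`. It vanishes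
at the boundary node `0`, and at the boundary node `n + 1` when `sin ((n + 1) θ) = 0`. -/
noncomputable def sineMode (n : ℕ) (θ : ℝ) : Fin n → ℝ :=
  fun i => sin (((i + 1 : ℕ) : ℝ) * θ)

section SineMode

variable {n m : ℕ} {θ : ℝ}

lemma sineMode_ne_zero (hn : 0 < n) (hθ : sin θ ≠ 0) : sineMode n θ ≠ 0 := fun h =>
  hθ (by simpa [sineMode] using congrFun h ⟨0, hn⟩)

lemma sineMode_pi_sub_apply (θ : ℝ) (i : Fin n) :
    sineMode n (π - θ) i = (-1) ^ (i : ℕ) * sineMode n θ i := by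
  simp only [sineMode, mul_sub, sin_sub, sin_nat_mul_pi, cos_nat_mul_pi]
  ring

lemma helmholtzMat_mulVec_sineMode (e k : ℝ) (hθ : sin (((n + 1 : ℕ) : ℝ) * θ) = 0) :
    helmholtzMat n e k *ᵥ sineMode n θ =
      (4 / e ^ 2 * sin (θ / 2) ^ 2 - k ^ 2) • sineMode n θ := by
  ext i
  have stencil : (helmholtzMat n e k *ᵥ sineMode n θ) i = _ :=
    helmholtzMat_mulVec_apply e k (g := fun x => sin (x * θ)) (by simp) hθ i
  have neighbours := two_mul_sin_mul_cos (((i + 1 : ℕ) : ℝ) * θ) θ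
  have half_angle := sin_sq_eq_half_sub (θ / 2)
  rw [mul_div_cancel₀ θ two_ne_zero] at half_angle
  simp only [stencil, sineMode, Pi.smul_apply, smul_eq_mul]
  rw [half_angle,
    show ((i : ℕ) : ℝ) * θ = ((i + 1 : ℕ) : ℝ) * θ - θ by push_cast; ring,
    show ((i + 2 : ℕ) : ℝ) * θ = ((i + 1 : ℕ) : ℝ) * θ + θ by push_cast; ring, ← neighbours]
  ring

lemma restrictMat_mulVec_sineMode (m : ℕ) (θ : ℝ) :
    restrictMat m *ᵥ sineMode (2 * m + 1) θ = cos (θ / 2) ^ 2 • sineMode m (2 * θ) := by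
  ext i
  have stencil : (restrictMat m *ᵥ sineMode (2 * m + 1) θ) i = _ :=
    restrictMat_mulVec_apply (fun x => sin (x * θ)) i
  have neighbours := two_mul_sin_mul_cos (((i + 1 : ℕ) : ℝ) * (2 * θ)) θ
  have half_angle := cos_sq (θ / 2)
  rw [mul_div_cancel₀ θ two_ne_zero] at half_angle
  simp only [stencil, sineMode, Pi.smul_apply, smul_eq_mul]
  rw [half_angle,
    show ((2 * i + 1 : ℕ) : ℝ) * θ = ((i + 1 : ℕ) : ℝ) * (2 * θ) - θ by push_cast; ring,
    show ((2 * i + 2 : ℕ) : ℝ) * θ = ((i + 1 : ℕ) : ℝ) * (2 * θ) by push_cast; ring,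
    show ((2 * i + 3 : ℕ) : ℝ) * θ = ((i + 1 : ℕ) : ℝ) * (2 * θ) + θ by push_cast; ring]
  linear_combination -neighbours / 4

lemma prolongMat_mulVec_sineMode (hθ : sin (((m + 1 : ℕ) : ℝ) * (2 * θ)) = 0) :
    prolongMat m *ᵥ sineMode m (2 * θ) =
      cos (θ / 2) ^ 2 • sineMode (2 * m + 1) θ -
        sin (θ / 2) ^ 2 • sineMode (2 * m + 1) (π - θ) := by
  ext p
  have interpolation : (prolongMat m *ᵥ sineMode m (2 * θ)) p = _ :=
    prolongMat_mulVec_apply (g := fun x => sin (x * (2 * θ))) (by simp) hθ p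
  simp only [interpolation, Pi.sub_apply, Pi.smul_apply, smul_eq_mul, sineMode_pi_sub_apply]
  simp only [sineMode]
  obtain ⟨l, hl | hl⟩ := Nat.even_or_odd' (p : ℕ)
  · have neighbours := two_mul_sin_mul_cos (((2 * l + 1 : ℕ) : ℝ) * θ) θ
    have double_angle := cos_two_mul' (θ / 2)
    rw [mul_div_cancel₀ θ two_ne_zero] at double_angle
    rw [hl, show (2 * l + 1) / 2 = l by omega, show (2 * l + 2) / 2 = l + 1 by omega,
      (even_two_mul l).neg_one_pow,
      show (l : ℝ) * (2 * θ) = ((2 * l + 1 : ℕ) : ℝ) * θ - θ by push_cast; ring,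
      show ((l + 1 : ℕ) : ℝ) * (2 * θ) = ((2 * l + 1 : ℕ) : ℝ) * θ + θ by push_cast; ring]
    linear_combination -neighbours / 2 + sin (((2 * l + 1 : ℕ) : ℝ) * θ) * double_angle
  · rw [hl, show (2 * l + 1 + 1) / 2 = l + 1 by omega, show (2 * l + 1 + 2) / 2 = l + 1 by omega,
      (odd_two_mul_add_one l).neg_one_pow,
      show ((l + 1 : ℕ) : ℝ) * (2 * θ) = ((2 * l + 1 + 1 : ℕ) : ℝ) * θ by push_cast; ring]
    linear_combination
      -sin (((2 * l + 1 + 1 : ℕ) : ℝ) * θ) * sin_sq_add_cos_sq (θ / 2)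

end SineMode

section GridModes

variable {m j : ℕ}

lemma two_mul_add_two_mul_meshH (m : ℕ) : (2 * m + 2) * meshH m = 1 := by
  rw [meshH, mul_one_div_cancel (by positivity)]

lemma fineSine_eq_sineMode (m j : ℕ) : fineSine m j = sineMode (2 * m + 1) (j * π * meshH m) := by
  ext i
  simp only [fineSine, sineMode, Nat.cast_add, Nat.cast_one, mul_assoc]

lemma fineSine_complement (hj : j ≤ 2 * m + 2) :
    fineSine m (2 * m + 2 - j) = sineMode (2 * m + 1) (π - j * π * meshH m) := by
  rw [fineSine_eq_sineMode]
  congr 1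
  push_cast [Nat.cast_sub hj]
  linear_combination π * two_mul_add_two_mul_meshH m

lemma sin_fine_boundary (m j : ℕ) : sin (((2 * m + 1 + 1 : ℕ) : ℝ) * (j * π * meshH m)) = 0 := by
  rw [← sin_nat_mul_pi j]
  congr 1
  push_cast
  linear_combination j * π * two_mul_add_two_mul_meshH m

lemma sin_coarse_boundary (m j : ℕ) : sin (((m + 1 : ℕ) : ℝ) * (2 * (j * π * meshH m))) = 0 := by
  rw [← sin_fine_boundary m j]
  congr 1
  push_cast
  ring

lemma helmholtzMat_mulVec_fineSine (m j : ℕ) (k : ℝ) :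
    helmholtzMat (2 * m + 1) (meshH m) k *ᵥ fineSine m j = lamFine m k j • fineSine m j := by
  rw [fineSine_eq_sineMode, helmholtzMat_mulVec_sineMode _ _ (sin_fine_boundary m j), lamFine]

lemma helmholtzMat_mulVec_coarse_sineMode (m j : ℕ) (k : ℝ) :
    helmholtzMat m (2 * meshH m) k *ᵥ sineMode m (2 * (j * π * meshH m)) =
      lamCoarse m k j • sineMode m (2 * (j * π * meshH m)) := by
  rw [helmholtzMat_mulVec_sineMode _ _ (sin_coarse_boundary m j), lamCoarse,
    mul_div_cancel_left₀ _ two_ne_zero]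
  congr 3
  ring

lemma coarse_sineMode_ne_zero (hj1 : 1 ≤ j) (hjm : j ≤ m) :
    sineMode m (2 * (j * π * meshH m)) ≠ 0 := by
  have hmesh : 0 < meshH m := by unfold meshH; positivity
  have angle_pos : 0 < 2 * (j * π * meshH m) :=
    mul_pos two_pos (mul_pos (mul_pos (Nat.cast_pos.mpr hj1) pi_pos) hmesh)
  have angle_lt_pi : 2 * (j * π * meshH m) < π :=
    calc 2 * (j * π * meshH m) = π * ((2 * j) * meshH m) := by ring
      _ < π * ((2 * m + 2) * meshH m) := by gcongr; exact_mod_cast (by omega : 2 * j < 2 * m + 2)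
      _ = π := by rw [two_mul_add_two_mul_meshH, mul_one]
  exact sineMode_ne_zero (by omega) (sin_pos_of_pos_of_lt_pi angle_pos angle_lt_pi).ne'

lemma lamCoarse_ne_zero {k : ℝ} (hj1 : 1 ≤ j) (hjm : j ≤ m)
    (hAH : IsUnit (helmholtzMat m (2 * meshH m) k).det) : lamCoarse m k j ≠ 0 :=
  eigenvalue_ne_zero_of_isUnit_det hAH (coarse_sineMode_ne_zero hj1 hjm)
    (helmholtzMat_mulVec_coarse_sineMode m j k)

end GridModes

theorem stmt19_general (m : ℕ) (k : ℝ) (j : ℕ) (hj : j ≤ 2 * m + 2)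
    (hlam : lamCoarse m k j ≠ 0) (hAH : IsUnit (helmholtzMat m (2 * meshH m) k).det) :
    ((1 : Matrix (Fin (2 * m + 1)) (Fin (2 * m + 1)) ℝ) -
        prolongMat m * (helmholtzMat m (2 * meshH m) k)⁻¹ * restrictMat m *
          helmholtzMat (2 * m + 1) (meshH m) k).mulVec (fineSine m j) =
      (1 - lamFine m k j / lamCoarse m k j * Real.cos (j * π * meshH m / 2) ^ 4) •
          fineSine m j +
        (lamFine m k j / lamCoarse m k j * Real.cos (j * π * meshH m / 2) ^ 2 *
            Real.sin (j * π * meshH m / 2) ^ 2) •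
          fineSine m (2 * m + 2 - j) := by
  have restriction : restrictMat m *ᵥ fineSine m j =
      cos (j * π * meshH m / 2) ^ 2 • sineMode m (2 * (j * π * meshH m)) := by
    rw [fineSine_eq_sineMode, restrictMat_mulVec_sineMode]
  have prolongation : prolongMat m *ᵥ sineMode m (2 * (j * π * meshH m)) =
      cos (j * π * meshH m / 2) ^ 2 • fineSine m j -
        sin (j * π * meshH m / 2) ^ 2 • fineSine m (2 * m + 2 - j) := by
    rw [prolongMat_mulVec_sineMode (sin_coarse_boundary m j), fineSine_complement hj,
      fineSine_eq_sineMode]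
  rw [coarseGridCorrection_mulVec hAH hlam (helmholtzMat_mulVec_fineSine m j k)
    (helmholtzMat_mulVec_coarse_sineMode m j k) restriction prolongation, ← pow_mul]

/-- Let `N = 2m+1` be odd, `1 ≤ j ≤ m`, and assume the re-discretized coarse-grid
matrix `A^H` (mesh size `H = 2h`) is invertible.  Then the two-grid
coarse-grid-correction error-propagation operator
`E = I - I_H^h (A^H)⁻¹ I_h^H A^h` acts on the fine-grid eigenvector `v_j` exactly as
`E v_j = (1 - (λ_j^h/λ_j^H)·cos⁴(jπh/2))·v_j
        + (λ_j^h/λ_j^H)·cos²(jπh/2)·sin²(jπh/2)·v_{N+1−j}`. -/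
theorem stmt19 (m : ℕ) (hm : 0 < m) (k : ℝ) (j : ℕ) (hj1 : 1 ≤ j) (hjm : j ≤ m)
    (hAH : IsUnit (helmholtzMat m (2 * meshH m) k).det) :
    ((1 : Matrix (Fin (2 * m + 1)) (Fin (2 * m + 1)) ℝ) -
        prolongMat m * (helmholtzMat m (2 * meshH m) k)⁻¹ * restrictMat m *
          helmholtzMat (2 * m + 1) (meshH m) k).mulVec (fineSine m j) =
      (1 - lamFine m k j / lamCoarse m k j * Real.cos (j * π * meshH m / 2) ^ 4) •
          fineSine m j +
        (lamFine m k j / lamCoarse m k j * Real.cos (j * π * meshH m / 2) ^ 2 *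
            Real.sin (j * π * meshH m / 2) ^ 2) •
          fineSine m (2 * m + 2 - j) :=
  stmt19_general m k j (by omega) (lamCoarse_ne_zero hj1 hjm hAH) hAH
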